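/- For every n ≥ 1 there is a constant C(n) with the following property. Let 0 < ε ≤ 1/2, let a > 3, let B be the unit ball of ℝⁿ centered at the origin, and let E ⊆ (2B)ᶜ be a measurable set with |E ∩ aB| < ε. Then there exists a locally integrable function f on ℝⁿ such that f = 0 on E, f = 1 on B, and the BMO seminorm of f satisfies sup_Q ⨍_Q |f − ⨍_Q f| ≤ C(n) / min{log a, log(1/ε)}, where the supremum is over all axis-parallel cubes Q ⊆ ℝⁿ and ⨍_Q denotes the average over Q. -/

import Mathlib

open Metric MeasureTheory

/-- The axis-parallel cube with lower corner `z` and side length `l`. -/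
def axisCube {n : ℕ} (z : EuclideanSpace ℝ (Fin n)) (l : ℝ) :
    Set (EuclideanSpace ℝ (Fin n)) :=
  {y | ∀ i, z i ≤ y i ∧ y i ≤ z i + l}

/-!
By Coifman and Rochberg, the logarithm of the maximal function `M 1_U` of a set `U` has BMO norm
bounded independently of `U`. Truncated below at level `-N` and rescaled, it becomes a function
that is `1` on `U`, `0` where `M 1_U ≤ 2⁻ᴺ`, and has BMO norm `O(1 / N)`. Let `g` and `h` be the
functions so obtained from the unit ball and from a small neighbourhood of `E ∩ aB`. Then
`max (g - h) 0` separates the two sets: `h` vanishes on the unit ball as soon as `2ᴺ ε ≲ 1`, and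
`g` vanishes outside `aB` as soon as `2ᴺ ≲ a`, so `N` may be taken comparable to
`min (log a) (log (1 / ε))`.
-/

open Module (finrank)
open scoped ENNReal

section MeanOscillation

variable {α : Type*} [MeasurableSpace α] {ν : Measure α} {f : α → ℝ}

/-- The mean oscillation of `f` with respect to `ν`; the mean oscillation on a set `Q` is obtained
for `ν = μ.restrict Q`. -/
noncomputable def meanOscillation (ν : Measure α) (f : α → ℝ) : ℝ :=
  ⨍ y, |f y - ⨍ w, f w ∂ν| ∂ν

theorem average_mono_of_integrable {g : α → ℝ} (hf : Integrable f ν) (hg : Integrable g ν)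
    (h : ∀ x, f x ≤ g x) : ⨍ x, f x ∂ν ≤ ⨍ x, g x ∂ν :=
  integral_mono hf.to_average hg.to_average h

variable [IsFiniteMeasure ν]

theorem meanOscillation_le_two_mul_average_abs_sub (hf : Integrable f ν) (b : ℝ) :
    meanOscillation ν f ≤ 2 * ⨍ x, |f x - b| ∂ν := by
  rcases eq_zero_or_neZero ν with rfl | hν
  · simp [meanOscillation]
  set A := ⨍ w, f w ∂ν
  have hfb : Integrable (fun x => f x - b) ν := hf.sub (integrable_const b)
  have hbA : |b - A| ≤ ⨍ x, |f x - b| ∂ν := by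
    have hA : A - b = ⨍ x, (f x - b) ∂ν := by
      conv_lhs => rw [← average_const ν b]
      exact (integral_sub hf.to_average (integrable_const b).to_average).symm
    rw [abs_sub_comm, hA]
    exact abs_integral_le_integral_abs
  calc meanOscillation ν f
      ≤ ⨍ x, (|f x - b| + |b - A|) ∂ν :=
        average_mono_of_integrable (hf.sub (integrable_const A)).abs
          (hfb.abs.add (integrable_const _)) fun x => abs_sub_le _ _ _
    _ = ⨍ x, |f x - b| ∂ν + |b - A| := by
        conv_rhs => rw [← average_const ν |b - A|]
        exact integral_add hfb.abs.to_average (integrable_const _).to_average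
    _ ≤ 2 * ⨍ x, |f x - b| ∂ν := by linarith

theorem meanOscillation_le_of_mem_Icc [NeZero ν] {a b : ℝ} (hf : Integrable f ν)
    (hab : ∀ x, f x ∈ Set.Icc a b) : meanOscillation ν f ≤ b - a :=
  calc meanOscillation ν f
      ≤ 2 * ⨍ x, |f x - (a + b) / 2| ∂ν := meanOscillation_le_two_mul_average_abs_sub hf _
    _ ≤ 2 * ⨍ _, (b - a) / 2 ∂ν := by
        gcongr
        refine average_mono_of_integrable (hf.sub (integrable_const _)).abs (integrable_const _)
          fun x => abs_le.2 ?_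
        constructor <;> linarith [(hab x).1, (hab x).2]
    _ = b - a := by rw [average_const]; ring

end MeanOscillation

section Density

variable {E : Type*} [NormedAddCommGroup E] [MeasurableSpace E]

/-- The set where the uncentred maximal function of the indicator of `U` exceeds `A⁻¹`. -/
def densitySet (μ : Measure E) (U : Set E) (A : ℝ≥0∞) : Set E :=
  {x | ∃ y ρ, x ∈ ball y ρ ∧ μ (ball y ρ) < A * μ (U ∩ ball y ρ)}

variable {μ : Measure E} {U Q : Set E} {A A' : ℝ≥0∞} {c x y : E} {K r ρ δ : ℝ}

theorem isOpen_densitySet : IsOpen (densitySet μ U A) := by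
  refine isOpen_iff_forall_mem_open.2 fun x ⟨y, ρ, hx, hlt⟩ => ?_
  exact ⟨ball y ρ, fun w hw => ⟨y, ρ, hw, hlt⟩, isOpen_ball, hx⟩

theorem densitySet_mono (h : A ≤ A') : densitySet μ U A ⊆ densitySet μ U A' :=
  fun _ ⟨y, ρ, hx, hlt⟩ => ⟨y, ρ, hx, hlt.trans_le (mul_le_mul_left h _)⟩

theorem mul_measure_inter_ball_le_of_notMem_densitySet (hx : x ∉ densitySet μ U A)
    (hxy : x ∈ ball y ρ) : A * μ (U ∩ ball y ρ) ≤ μ (ball y ρ) :=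
  le_of_not_gt fun hlt => hx ⟨y, ρ, hxy, hlt⟩

theorem notMem_densitySet_of_le_dist [BorelSpace E] [μ.IsAddHaarMeasure]
    (hdist : ∀ w ∈ U, 2 * δ ≤ dist x w) (hA : A * μ U ≤ μ (ball 0 δ)) : x ∉ densitySet μ U A := by
  rintro ⟨y, ρ, hxy, hlt⟩
  have hU : (U ∩ ball y ρ).Nonempty := by
    rw [Set.nonempty_iff_ne_empty]
    intro hempty
    simp [hempty] at hlt
  obtain ⟨w, hwU, hwy⟩ := hU
  have hδρ : δ ≤ ρ := by
    have := hdist w hwU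
    have := dist_triangle_right x w y
    rw [mem_ball] at hxy hwy
    linarith
  refine hlt.not_ge ?_
  calc A * μ (U ∩ ball y ρ) ≤ A * μ U := by gcongr; exact Set.inter_subset_left
    _ ≤ μ (ball y δ) := hA.trans_eq (Measure.addHaar_ball_center μ y δ).symm
    _ ≤ μ (ball y ρ) := measure_mono (ball_subset_ball hδρ)

variable [NormedSpace ℝ E] [FiniteDimensional ℝ E] [μ.IsAddHaarMeasure]

theorem subset_densitySet_of_isOpen (hU : IsOpen U) (hA : 1 < A) : U ⊆ densitySet μ U A := by
  intro x hx
  obtain ⟨ρ, hρ, hsub⟩ := Metric.isOpen_iff.1 hU x hx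
  refine ⟨x, ρ, mem_ball_self hρ, ?_⟩
  rw [Set.inter_eq_self_of_subset_right hsub]
  simpa only [one_mul] using
    ENNReal.mul_lt_mul_left (measure_ball_pos μ x hρ).ne' measure_ball_lt_top.ne hA

variable [BorelSpace E]

/-- A Vitali covering argument, as in the weak type (1,1) bound for the maximal function. -/
theorem measure_biUnion_ball_le_of_density {ι : Type*} {t : Set ι} {x : ι → E} {r : ι → ℝ}
    {R : ℝ} {V : Set E} (hpos : ∀ i ∈ t, 0 < r i) (hR : ∀ i ∈ t, r i ≤ R)
    (hV : ∀ i ∈ t, μ (ball (x i) (r i)) ≤ A * μ (V ∩ ball (x i) (r i))) :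
    μ (⋃ i ∈ t, ball (x i) (r i)) ≤ ENNReal.ofReal (5 ^ finrank ℝ E) * A * μ V := by
  obtain ⟨u, hut, hdisj, hcover⟩ :=
    Vitali.exists_disjoint_subfamily_covering_enlargement_closedBall t x r R hR 5 (by norm_num)
  have hdisj : u.PairwiseDisjoint fun i => ball (x i) (r i) :=
    hdisj.mono fun i => ball_subset_closedBall
  have hcount : u.Countable := hdisj.countable_of_isOpen (fun _ _ => isOpen_ball)
    fun i hi => nonempty_ball.2 (hpos i (hut hi))
  have hsub : ⋃ i ∈ t, ball (x i) (r i) ⊆ ⋃ i ∈ u, closedBall (x i) (5 * r i) := by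
    refine Set.iUnion₂_subset fun i hi => ?_
    obtain ⟨j, hj, hij⟩ := hcover i hi
    exact (ball_subset_closedBall.trans hij).trans
      (Set.subset_biUnion_of_mem (u := fun j => closedBall (x j) (5 * r j)) hj)
  have hball : ∀ i ∈ u, μ (closedBall (x i) (5 * r i)) ≤
      ENNReal.ofReal (5 ^ finrank ℝ E) * A * μ.restrict V (ball (x i) (r i)) := by
    intro i hi
    have hri := hpos i (hut hi)
    rw [Measure.addHaar_closedBall_mul μ _ (by norm_num) hri.le,
      Measure.addHaar_closedBall μ _ hri.le, ← Measure.addHaar_ball_of_pos μ (x i) hri,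
      Measure.restrict_apply measurableSet_ball, Set.inter_comm, mul_assoc]
    gcongr
    exact hV i (hut hi)
  calc μ (⋃ i ∈ t, ball (x i) (r i))
      ≤ ∑' i : u, μ (closedBall (x i) (5 * r i)) :=
        (measure_mono hsub).trans (measure_biUnion_le _ hcount _)
    _ ≤ ∑' i : u, ENNReal.ofReal (5 ^ finrank ℝ E) * A * μ.restrict V (ball (x i) (r i)) :=
        ENNReal.tsum_le_tsum fun i => hball i i.2
    _ = ENNReal.ofReal (5 ^ finrank ℝ E) * A * μ.restrict V (⋃ i ∈ u, ball (x i) (r i)) := by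
        rw [ENNReal.tsum_mul_left, measure_biUnion hcount hdisj fun _ _ => measurableSet_ball]
    _ ≤ ENNReal.ofReal (5 ^ finrank ℝ E) * A * μ V := by
        refine mul_le_mul_right ?_ _
        exact (measure_mono (Set.subset_univ _)).trans_eq (Measure.restrict_apply_univ V)

theorem le_mul_of_dense_ball (hK : 0 < K) (hQ : Q ⊆ ball c (K * r)) {x₀ : E} (hx₀ : x₀ ∈ Q)
    (hx₀A : x₀ ∉ densitySet μ U A') (hr : r ≤ ρ) (hxQ : x ∈ Q) (hxy : x ∈ ball y ρ)
    (hlt : μ (ball y ρ) < A * μ (U ∩ ball y ρ)) :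
    A' ≤ ENNReal.ofReal ((2 * K + 1) ^ finrank ℝ E) * A := by
  have hρ : 0 < ρ := pos_of_mem_ball hxy
  have hx₀y : x₀ ∈ ball y ((2 * K + 1) * ρ) := by
    have := mem_ball.1 (hQ hxQ)
    have := mem_ball.1 (hQ hx₀)
    have := mem_ball.1 hxy
    have : K * r ≤ K * ρ := by gcongr
    have := dist_triangle x₀ x y
    have := dist_triangle_right x₀ x c
    rw [mem_ball]
    linarith
  have hsub : ball y ρ ⊆ ball y ((2 * K + 1) * ρ) := ball_subset_ball (by nlinarith)
  have hmul : A' * μ (ball y ρ) ≤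
      ENNReal.ofReal ((2 * K + 1) ^ finrank ℝ E) * A * μ (ball y ρ) :=
    calc A' * μ (ball y ρ) ≤ A' * (A * μ (U ∩ ball y ρ)) := by gcongr
      _ = A * (A' * μ (U ∩ ball y ρ)) := by ring
      _ ≤ A * (A' * μ (U ∩ ball y ((2 * K + 1) * ρ))) := by gcongr
      _ ≤ A * μ (ball y ((2 * K + 1) * ρ)) := by
          gcongr
          exact mul_measure_inter_ball_le_of_notMem_densitySet hx₀A hx₀y
      _ = ENNReal.ofReal ((2 * K + 1) ^ finrank ℝ E) * A * μ (ball y ρ) := by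
          rw [Measure.addHaar_ball_mul_of_pos μ y (by positivity),
            Measure.addHaar_ball_center μ y ρ]
          ring
  exact (ENNReal.mul_le_mul_iff_left (measure_ball_pos μ y hρ).ne' measure_ball_lt_top.ne).1 hmul

theorem mul_measure_inter_densitySet_le_of_small_balls (hr : 0 < r) (hK : 0 < K)
    (hQ : Q ⊆ ball c (K * r)) {x₀ : E} (hx₀ : x₀ ∈ Q) (hx₀A : x₀ ∉ densitySet μ U A')
    (hsmall : ∀ x ∈ Q, ∀ y ρ, x ∈ ball y ρ → μ (ball y ρ) < A * μ (U ∩ ball y ρ) → ρ ≤ r) :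
    A' * μ (Q ∩ densitySet μ U A) ≤
      ENNReal.ofReal ((5 * (K + 2)) ^ finrank ℝ E) * A * μ (ball c r) := by
  set V := U ∩ ball c ((K + 2) * r)
  let t : Set (E × ℝ) := {p | (Q ∩ ball p.1 p.2).Nonempty ∧
    μ (ball p.1 p.2) < A * μ (U ∩ ball p.1 p.2)}
  have hradius : ∀ p ∈ t, 0 < p.2 ∧ p.2 ≤ r := fun p ⟨⟨x, hxQ, hxp⟩, hlt⟩ =>
    ⟨pos_of_mem_ball hxp, hsmall x hxQ _ _ hxp hlt⟩
  have hlocal : ∀ p ∈ t, ball p.1 p.2 ⊆ ball c ((K + 2) * r) := by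
    intro p hp w hw
    obtain ⟨x, hxQ, hxp⟩ := hp.1
    have := (hradius p hp).2
    have := mem_ball.1 (hQ hxQ)
    have := dist_triangle w x c
    have := dist_triangle_right w x p.1
    rw [mem_ball] at hw hxp ⊢
    linarith
  have hcover : Q ∩ densitySet μ U A ⊆ ⋃ p ∈ t, ball p.1 p.2 := fun x ⟨hxQ, y, ρ, hxy, hlt⟩ =>
    Set.mem_biUnion (x := (y, ρ)) ⟨⟨x, hxQ, hxy⟩, hlt⟩ hxy
  have hvitali : μ (⋃ p ∈ t, ball p.1 p.2) ≤ ENNReal.ofReal (5 ^ finrank ℝ E) * A * μ V := by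
    refine measure_biUnion_ball_le_of_density (fun p hp => (hradius p hp).1)
      (fun p hp => (hradius p hp).2) fun p hp => hp.2.le.trans ?_
    gcongr A * μ ?_
    exact fun w hw => ⟨⟨hw.1, hlocal p hp hw.2⟩, hw.2⟩
  have hV : A' * μ V ≤ μ (ball c ((K + 2) * r)) :=
    mul_measure_inter_ball_le_of_notMem_densitySet hx₀A
      (ball_subset_ball (by nlinarith) (hQ hx₀))
  calc A' * μ (Q ∩ densitySet μ U A)
      ≤ A' * (ENNReal.ofReal (5 ^ finrank ℝ E) * A * μ V) := by
        gcongr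
        exact (measure_mono hcover).trans hvitali
    _ = ENNReal.ofReal (5 ^ finrank ℝ E) * A * (A' * μ V) := by ring
    _ ≤ ENNReal.ofReal (5 ^ finrank ℝ E) * A * μ (ball c ((K + 2) * r)) := by gcongr
    _ = ENNReal.ofReal ((5 * (K + 2)) ^ finrank ℝ E) * A * μ (ball c r) := by
        rw [Measure.addHaar_ball_mul_of_pos μ c (by positivity), Measure.addHaar_ball_center μ c r,
          mul_pow, ENNReal.ofReal_mul (by positivity)]
        ring

/-- A dense ball of radius at least `r` meeting `Q` bounds the ratio `A' / A`, since `x₀` lies in a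
fixed dilate of it; if there is none, the Vitali argument takes place inside a fixed dilate of
`ball c r`. -/
theorem mul_measure_inter_densitySet_le (hr : 0 < r) (hK : 0 < K) (hQ : Q ⊆ ball c (K * r))
    {x₀ : E} (hx₀ : x₀ ∈ Q) (hx₀A : x₀ ∉ densitySet μ U A') :
    A' * μ (Q ∩ densitySet μ U A) ≤
      ENNReal.ofReal ((5 * (K + 2) ^ 2) ^ finrank ℝ E) * A * μ (ball c r) := by
  by_cases! hlarge : ∃ x ∈ Q, ∃ y ρ, x ∈ ball y ρ ∧ μ (ball y ρ) < A * μ (U ∩ ball y ρ) ∧ r < ρ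
  · obtain ⟨x, hxQ, y, ρ, hxy, hlt, hrρ⟩ := hlarge
    have hconst : (2 * K + 1) * K ≤ 5 * (K + 2) ^ 2 := by nlinarith
    calc A' * μ (Q ∩ densitySet μ U A)
        ≤ ENNReal.ofReal ((2 * K + 1) ^ finrank ℝ E) * A * μ (ball c (K * r)) := by
          gcongr
          · exact le_mul_of_dense_ball hK hQ hx₀ hx₀A hrρ.le hxQ hxy hlt
          · exact Set.inter_subset_left.trans hQ
      _ = ENNReal.ofReal (((2 * K + 1) * K) ^ finrank ℝ E) * A * μ (ball c r) := by
          rw [Measure.addHaar_ball_mul_of_pos μ c hK, Measure.addHaar_ball_center μ c r,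
            mul_pow, ENNReal.ofReal_mul (by positivity)]
          ring
      _ ≤ ENNReal.ofReal ((5 * (K + 2) ^ 2) ^ finrank ℝ E) * A * μ (ball c r) := by
          gcongr
  · refine (mul_measure_inter_densitySet_le_of_small_balls hr hK hQ hx₀ hx₀A hlarge).trans ?_
    gcongr
    nlinarith

end Density

section Oscillation

variable {E : Type*} [NormedAddCommGroup E] [MeasurableSpace E]

/-- `Q` is measurable and squeezed between two concentric balls whose radii have ratio `K`. -/
structure HasEccentricityLE (K : ℝ) (Q : Set E) : Prop where
  measurableSet : MeasurableSet Q
  exists_ball : ∃ c, ∃ r > 0, ball c r ⊆ Q ∧ Q ⊆ ball c (K * r)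

variable {μ : Measure E} {U V Q : Set E} {K : ℝ} {N k m : ℕ} {x : E}

theorem HasEccentricityLE.pos (hQ : HasEccentricityLE K Q) : 0 < K := by
  obtain ⟨c, r, hr, hball, hQball⟩ := hQ.exists_ball
  exact pos_of_mul_pos_left (pos_of_mem_ball (hQball (hball (mem_ball_self hr)))) hr.le

/-- The number of scales `1 ≤ k ≤ N` at which `x` lies in the density set of `U` at threshold
`2⁻ᵏ`: up to a bounded error, `N + log₂ (M 1_U)` truncated below at `0`. -/
noncomputable def densityCount (μ : Measure E) (U : Set E) (N : ℕ) (x : E) : ℝ :=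
  ∑ k ∈ Finset.range N, (densitySet μ U (2 ^ (k + 1))).indicator 1 x

theorem densitySet_two_pow_mono (h : k ≤ m) : densitySet μ U (2 ^ k) ⊆ densitySet μ U (2 ^ m) :=
  densitySet_mono (pow_le_pow_right₀ one_le_two h)

theorem densityCount_mem_Icc : densityCount μ U N x ∈ Set.Icc 0 (N : ℝ) := by
  refine ⟨Finset.sum_nonneg fun _ _ => Set.indicator_nonneg (fun _ _ => zero_le_one) _, ?_⟩
  calc densityCount μ U N x ≤ ∑ _k ∈ Finset.range N, (1 : ℝ) :=
        Finset.sum_le_sum fun _ _ => Set.indicator_le_self' (fun _ _ => zero_le_one) _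
    _ = N := by simp

theorem densityCount_eq_zero (hx : x ∉ densitySet μ U (2 ^ N)) : densityCount μ U N x = 0 :=
  Finset.sum_eq_zero fun _ hk => Set.indicator_of_notMem
    (fun h => hx (densitySet_two_pow_mono (Finset.mem_range.1 hk) h)) _

theorem measurable_densityCount [OpensMeasurableSpace E] : Measurable (densityCount μ U N) :=
  Finset.measurable_sum _ fun _ _ => measurable_one.indicator isOpen_densitySet.measurableSet

theorem HasEccentricityLE.measure_ne_zero [μ.IsAddHaarMeasure] (hQ : HasEccentricityLE K Q) :
    μ Q ≠ 0 := by
  obtain ⟨c, r, hr, hball, -⟩ := hQ.exists_ball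
  exact ((measure_ball_pos μ c hr).trans_le (measure_mono hball)).ne'

variable [NormedSpace ℝ E] [FiniteDimensional ℝ E] [μ.IsAddHaarMeasure]

theorem HasEccentricityLE.measure_ne_top (hQ : HasEccentricityLE K Q) : μ Q ≠ ∞ := by
  obtain ⟨c, r, -, -, hQball⟩ := hQ.exists_ball
  exact measure_ne_top_of_subset hQball measure_ball_lt_top.ne

theorem HasEccentricityLE.integrableOn_of_mem_Icc {f : E → ℝ} {a b : ℝ}
    (hQ : HasEccentricityLE K Q) (hf : Measurable f) (hab : ∀ x, f x ∈ Set.Icc a b) :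
    IntegrableOn f Q μ :=
  Measure.integrableOn_of_bounded hQ.measure_ne_top hf.aestronglyMeasurable
    (ae_of_all _ fun x => abs_le_max_abs_abs (hab x).1 (hab x).2)

theorem densityCount_eq_of_mem (hU : IsOpen U) (hx : x ∈ U) : densityCount μ U N x = N := by
  have htwo (k : ℕ) : (1 : ℝ≥0∞) < 2 ^ (k + 1) :=
    ENNReal.one_lt_two.trans_le (le_self_pow₀ one_le_two k.succ_ne_zero)
  have hmem (k : ℕ) : x ∈ densitySet μ U (2 ^ (k + 1)) :=
    subset_densitySet_of_isOpen hU (htwo k) hx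
  simp [densityCount, hmem]

variable [BorelSpace E]

theorem integrableOn_densityCount (hQ : HasEccentricityLE K Q) :
    IntegrableOn (densityCount μ U N) Q μ :=
  hQ.integrableOn_of_mem_Icc measurable_densityCount fun _ => densityCount_mem_Icc

theorem measureReal_inter_densitySet_le (hQ : HasEccentricityLE K Q)
    (hm : ¬ Q ⊆ densitySet μ U (2 ^ m)) :
    μ.real (Q ∩ densitySet μ U (2 ^ k)) ≤
      (5 * (K + 2) ^ 2) ^ finrank ℝ E * (2 ^ k / 2 ^ m) * μ.real Q := by
  obtain ⟨x₀, hx₀, hx₀m⟩ := Set.not_subset.1 hm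
  obtain ⟨c, r, hr, hball, hQball⟩ := hQ.exists_ball
  have hQ_top : μ Q ≠ ∞ := hQ.measure_ne_top
  have hdecay : 2 ^ m * μ (Q ∩ densitySet μ U (2 ^ k)) ≤
      ENNReal.ofReal ((5 * (K + 2) ^ 2) ^ finrank ℝ E) * 2 ^ k * μ Q :=
    (mul_measure_inter_densitySet_le hr hQ.pos hQball hx₀ hx₀m).trans (by gcongr)
  have hreal := ENNReal.toReal_mono (by finiteness) hdecay
  have hK := hQ.pos
  simp only [ENNReal.toReal_mul, ENNReal.toReal_pow, ENNReal.toReal_ofNat] at hreal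
  rw [ENNReal.toReal_ofReal (by positivity), mul_comm, ← le_div_iff₀ (by positivity)] at hreal
  exact hreal.trans_eq (by rw [measureReal_def]; ring)

theorem setAverage_densityCount_le (hQ : HasEccentricityLE K Q)
    (hm : m ≠ 0 → ¬ Q ⊆ densitySet μ U (2 ^ m)) :
    ⨍ x in Q, densityCount μ U m x ∂μ ≤ 2 * (5 * (K + 2) ^ 2) ^ finrank ℝ E := by
  have hK := hQ.pos
  have hQ_pos : 0 < μ.real Q := ENNReal.toReal_pos hQ.measure_ne_zero hQ.measure_ne_top
  have hQ_top : μ Q ≠ ∞ := hQ.measure_ne_top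
  have hmeas (k : ℕ) : MeasurableSet (densitySet μ U (2 ^ k)) := isOpen_densitySet.measurableSet
  have hintegral : ∫ x in Q, densityCount μ U m x ∂μ =
      ∑ k ∈ Finset.range m, μ.real (Q ∩ densitySet μ U (2 ^ (k + 1))) := by
    have hint (k : ℕ) : IntegrableOn ((densitySet μ U (2 ^ k)).indicator (1 : E → ℝ)) Q μ :=
      (integrableOn_const (C := (1 : ℝ)) hQ_top).indicator (hmeas k)
    simp only [densityCount]
    rw [integral_finsetSum _ fun k _ => hint (k + 1)]
    refine Finset.sum_congr rfl fun k _ => ?_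
    rw [integral_indicator_one (hmeas _), measureReal_restrict_apply (hmeas _), Set.inter_comm]
  have hgeom : ∑ k ∈ Finset.range m, (2 : ℝ) ^ (k + 1) / 2 ^ m ≤ 2 := by
    rw [← Finset.sum_div, div_le_iff₀ (by positivity)]
    simp only [pow_succ]
    rw [← Finset.sum_mul, geom_sum_eq (by norm_num)]
    linarith
  rw [setAverage_eq, smul_eq_mul, inv_mul_le_iff₀ hQ_pos, hintegral]
  calc ∑ k ∈ Finset.range m, μ.real (Q ∩ densitySet μ U (2 ^ (k + 1)))
      ≤ ∑ k ∈ Finset.range m,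
          (5 * (K + 2) ^ 2) ^ finrank ℝ E * (2 ^ (k + 1) / 2 ^ m) * μ.real Q :=
        Finset.sum_le_sum fun k hk => measureReal_inter_densitySet_le hQ
          (hm (Nat.ne_zero_of_lt (Finset.mem_range.1 hk)))
    _ = (5 * (K + 2) ^ 2) ^ finrank ℝ E * (∑ k ∈ Finset.range m, 2 ^ (k + 1) / 2 ^ m) *
          μ.real Q := by rw [← Finset.sum_mul, ← Finset.mul_sum]
    _ ≤ (5 * (K + 2) ^ 2) ^ finrank ℝ E * 2 * μ.real Q := by gcongr
    _ = μ.real Q * (2 * (5 * (K + 2) ^ 2) ^ finrank ℝ E) := by ring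

/-- The scales at which `Q` lies in the density set contribute a constant to `densityCount` on `Q`;
the measures of the remaining density sets in `Q` sum up geometrically. -/
theorem exists_setAverage_abs_densityCount_sub_le (hQ : HasEccentricityLE K Q) :
    ∃ b : ℝ, ⨍ x in Q, |densityCount μ U N x - b| ∂μ ≤ 2 * (5 * (K + 2) ^ 2) ^ finrank ℝ E := by
  classical
  set m := Nat.findGreatest (fun m => ¬ Q ⊆ densitySet μ U (2 ^ m)) N with hm
  have hmN : m ≤ N := Nat.findGreatest_le N
  have hsub : ∀ k ∈ Finset.Ico m N, Q ⊆ densitySet μ U (2 ^ (k + 1)) := fun k hk =>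
    not_not.1 (Nat.findGreatest_is_greatest (Nat.lt_succ_of_le (Finset.mem_Ico.1 hk).1)
      (Finset.mem_Ico.1 hk).2)
  have hcount : ∀ x ∈ Q, |densityCount μ U N x - (N - m : ℕ)| = densityCount μ U m x := by
    intro x hx
    have hsplit : densityCount μ U N x = densityCount μ U m x + (N - m : ℕ) := by
      rw [densityCount, ← Finset.sum_range_add_sum_Ico _ hmN, densityCount, add_right_inj,
        Finset.sum_congr rfl fun k hk => Set.indicator_of_mem (hsub k hk hx) _]
      simp
    rw [hsplit, add_sub_cancel_right, abs_of_nonneg densityCount_mem_Icc.1]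
  refine ⟨(N - m : ℕ), ?_⟩
  rw [setAverage_congr_fun hQ.measurableSet (ae_of_all _ hcount)]
  exact setAverage_densityCount_le hQ fun h => Nat.findGreatest_of_ne_zero hm.symm h

end Oscillation

section Separation

variable {E : Type*} [NormedAddCommGroup E] [MeasurableSpace E]

/-- `f` takes values in `[0, 1]`, is `0` on `S` and `1` on `T`, and its mean oscillation is at most
`D` on every set of eccentricity at most `K`. -/
structure IsBMOSeparator (μ : Measure E) (K D : ℝ) (S T : Set E) (f : E → ℝ) : Prop where
  measurable : Measurable f
  mem_Icc : ∀ x, f x ∈ Set.Icc 0 1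
  eq_zero : ∀ x ∈ S, f x = 0
  eq_one : ∀ x ∈ T, f x = 1
  meanOscillation_le : ∀ Q, HasEccentricityLE K Q → meanOscillation (μ.restrict Q) f ≤ D

variable {μ : Measure E} {S S' T T' U V Q : Set E} {K D D' : ℝ} {f : E → ℝ} {N : ℕ} {x : E}

theorem IsBMOSeparator.mono (hf : IsBMOSeparator μ K D S T f) (hD : D ≤ D') (hS : S' ⊆ S)
    (hT : T' ⊆ T) : IsBMOSeparator μ K D' S' T' f where
  measurable := hf.measurable
  mem_Icc := hf.mem_Icc
  eq_zero x hx := hf.eq_zero x (hS hx)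
  eq_one x hx := hf.eq_one x (hT hx)
  meanOscillation_le Q hQ := (hf.meanOscillation_le Q hQ).trans hD

theorem IsBMOSeparator.locallyIntegrable [IsLocallyFiniteMeasure μ]
    (hf : IsBMOSeparator μ K D S T f) : LocallyIntegrable f μ :=
  (locallyIntegrable_const (1 : ℝ)).mono hf.measurable.aestronglyMeasurable <|
    ae_of_all _ fun x => by simpa [abs_of_nonneg (hf.mem_Icc x).1] using (hf.mem_Icc x).2

/-- A positive multiple of the positive part of `log (M 1_V / M 1_U)`, up to truncation. -/
noncomputable def densitySeparator (μ : Measure E) (U V : Set E) (N : ℕ) (x : E) : ℝ :=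
  max ((densityCount μ V N x - densityCount μ U N x) / N) 0

theorem densitySeparator_mem_Icc : densitySeparator μ U V N x ∈ Set.Icc 0 1 := by
  refine ⟨le_max_right _ _, max_le (div_le_one_of_le₀ ?_ N.cast_nonneg) zero_le_one⟩
  exact (sub_le_self _ densityCount_mem_Icc.1).trans densityCount_mem_Icc.2

theorem densitySeparator_eq_zero (h : densityCount μ V N x ≤ densityCount μ U N x) :
    densitySeparator μ U V N x = 0 :=
  max_eq_right (div_nonpos_of_nonpos_of_nonneg (sub_nonpos.2 h) N.cast_nonneg)

theorem measurable_densitySeparator [OpensMeasurableSpace E] :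
    Measurable (densitySeparator μ U V N) :=
  ((measurable_densityCount.sub measurable_densityCount).div_const _).max measurable_const

variable [NormedSpace ℝ E] [FiniteDimensional ℝ E] [μ.IsAddHaarMeasure]

theorem isBMOSeparator_indicator (hT : MeasurableSet T) :
    IsBMOSeparator μ K 1 Tᶜ T (T.indicator 1) := by
  have hmeas : Measurable (T.indicator (1 : E → ℝ)) := measurable_one.indicator hT
  have hIcc (x : E) : T.indicator (1 : E → ℝ) x ∈ Set.Icc 0 1 :=
    ⟨Set.indicator_nonneg (fun _ _ => zero_le_one) x,
      Set.indicator_le_self' (fun _ _ => zero_le_one) x⟩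
  refine ⟨hmeas, hIcc, fun x hx => Set.indicator_of_notMem hx _,
    fun x hx => Set.indicator_of_mem hx _, fun Q hQ => ?_⟩
  have : IsFiniteMeasure (μ.restrict Q) := isFiniteMeasure_restrict.2 hQ.measure_ne_top
  have : NeZero (μ.restrict Q) := ⟨Measure.restrict_eq_zero.not.2 hQ.measure_ne_zero⟩
  simpa using meanOscillation_le_of_mem_Icc (hQ.integrableOn_of_mem_Icc hmeas hIcc) hIcc

variable [BorelSpace E]

theorem meanOscillation_densitySeparator_le (hQ : HasEccentricityLE K Q) :
    meanOscillation (μ.restrict Q) (densitySeparator μ U V N) ≤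
      8 * (5 * (K + 2) ^ 2) ^ finrank ℝ E / N := by
  obtain ⟨bU, hbU⟩ := exists_setAverage_abs_densityCount_sub_le (μ := μ) (U := U) (N := N) hQ
  obtain ⟨bV, hbV⟩ := exists_setAverage_abs_densityCount_sub_le (μ := μ) (U := V) (N := N) hQ
  have : IsFiniteMeasure (μ.restrict Q) := isFiniteMeasure_restrict.2 hQ.measure_ne_top
  have hU : IntegrableOn (fun x => |densityCount μ U N x - bU|) Q μ :=
    ((integrableOn_densityCount hQ).sub (integrable_const _)).abs
  have hV : IntegrableOn (fun x => |densityCount μ V N x - bV|) Q μ :=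
    ((integrableOn_densityCount hQ).sub (integrable_const _)).abs
  have hf : IntegrableOn (densitySeparator μ U V N) Q μ :=
    hQ.integrableOn_of_mem_Icc measurable_densitySeparator fun _ => densitySeparator_mem_Icc
  have hpointwise (x : E) : |densitySeparator μ U V N x - max ((bV - bU) / N) 0| ≤
      (|densityCount μ V N x - bV| + |densityCount μ U N x - bU|) / N := by
    refine (abs_max_sub_max_le_abs _ _ _).trans ?_
    rw [← sub_div, sub_sub_sub_comm, abs_div, Nat.abs_cast]
    gcongr
    exact abs_sub _ _
  calc meanOscillation (μ.restrict Q) (densitySeparator μ U V N)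
      ≤ 2 * ⨍ x in Q, |densitySeparator μ U V N x - max ((bV - bU) / N) 0| ∂μ :=
        meanOscillation_le_two_mul_average_abs_sub hf _
    _ ≤ 2 * ⨍ x in Q, (|densityCount μ V N x - bV| + |densityCount μ U N x - bU|) / N ∂μ := by
        gcongr
        exact average_mono_of_integrable (hf.sub (integrable_const _)).abs
          ((hV.add hU).div_const _) hpointwise
    _ = 2 * ((⨍ x in Q, |densityCount μ V N x - bV| ∂μ +
          ⨍ x in Q, |densityCount μ U N x - bU| ∂μ) / N) := by
        congr 1
        exact (integral_div _ _).trans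
          (congrArg (· / (N : ℝ)) (integral_add hV.to_average hU.to_average))
    _ ≤ 2 * ((2 * (5 * (K + 2) ^ 2) ^ finrank ℝ E + 2 * (5 * (K + 2) ^ 2) ^ finrank ℝ E) / N) := by
        gcongr
    _ = 8 * (5 * (K + 2) ^ 2) ^ finrank ℝ E / N := by ring

theorem isBMOSeparator_densitySeparator (hU : IsOpen U) (hV : IsOpen V) (hN : N ≠ 0) :
    IsBMOSeparator μ K (8 * (5 * (K + 2) ^ 2) ^ finrank ℝ E / N)
      (U ∪ (densitySet μ V (2 ^ N))ᶜ) (V \ densitySet μ U (2 ^ N)) (densitySeparator μ U V N) where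
  measurable := measurable_densitySeparator
  mem_Icc _ := densitySeparator_mem_Icc
  eq_zero := by
    rintro x (hxU | hxV) <;> apply densitySeparator_eq_zero
    · exact densityCount_mem_Icc.2.trans_eq (densityCount_eq_of_mem hU hxU).symm
    · exact (densityCount_eq_zero hxV).trans_le densityCount_mem_Icc.1
  eq_one x hx := by
    rw [densitySeparator, densityCount_eq_of_mem hV hx.1, densityCount_eq_zero hx.2, sub_zero,
      div_self (Nat.cast_ne_zero.2 hN), max_eq_left zero_le_one]
  meanOscillation_le _ := meanOscillation_densitySeparator_le

theorem notMem_densitySet_unitBall {a : ℝ} (hN : 2 ^ N * 3 ≤ a) (hx : x ∉ ball (0 : E) a) :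
    x ∉ densitySet μ (ball 0 1) (2 ^ N) := by
  have hone : (1 : ℝ) ≤ 2 ^ N := one_le_pow₀ one_le_two
  rw [mem_ball, not_lt] at hx
  have : Nontrivial E := nontrivial_of_ne x 0 (dist_pos.1 (by linarith))
  refine notMem_densitySet_of_le_dist (δ := 2 ^ N) (fun w hw => ?_) ?_
  · have := dist_triangle x w 0
    rw [mem_ball] at hw
    linarith
  · have hdim : (2 : ℝ) ^ N ≤ (2 ^ N) ^ finrank ℝ E :=
      le_self_pow₀ hone (Module.finrank_pos (R := ℝ)).ne'
    rw [Measure.addHaar_ball_of_pos μ 0 (r := 2 ^ N) (by positivity)]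
    gcongr
    simpa [ENNReal.ofReal_pow] using ENNReal.ofReal_le_ofReal hdim

theorem exists_isBMOSeparator_of_two_pow_mul_le {R a : ℝ} {t : ℝ≥0∞} (hR : 1 < R) (hN : N ≠ 0)
    (hNa : 2 ^ N * 3 ≤ a) (hNt : 2 ^ N * t ≤ μ (ball 0 ((R - 1) / 4))) (hS : S ⊆ (ball 0 R)ᶜ)
    (hSt : μ (S ∩ ball 0 a) < t) :
    ∃ f, IsBMOSeparator μ K (8 * (5 * (K + 2) ^ 2) ^ finrank ℝ E / N) S (ball 0 1) f := by
  obtain ⟨W, hSW, hW, hWt⟩ := Set.exists_isOpen_lt_of_lt _ _ hSt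
  set U := W ∩ (closedBall 0 ((1 + R) / 2))ᶜ
  have hU : IsOpen U := hW.inter isClosed_closedBall.isOpen_compl
  refine ⟨densitySeparator μ U (ball 0 1) N,
    (isBMOSeparator_densitySeparator hU isOpen_ball hN).mono le_rfl ?_ ?_⟩
  · intro x hx
    by_cases hxa : x ∈ ball 0 a
    · refine .inl ⟨hSW ⟨hx, hxa⟩, fun hx' => hS hx ?_⟩
      rw [mem_closedBall] at hx'
      exact mem_ball.2 (by linarith)
    · exact .inr (notMem_densitySet_unitBall hNa hxa)
  · refine fun x hx => ⟨hx, notMem_densitySet_of_le_dist (δ := (R - 1) / 4) (fun w hw => ?_) ?_⟩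
    · have hw := hw.2
      have := dist_triangle_left w 0 x
      rw [Set.mem_compl_iff, mem_closedBall, not_le] at hw
      rw [mem_ball] at hx
      linarith
    · refine le_trans ?_ hNt
      gcongr
      exact (measure_mono Set.inter_subset_left).trans hWt.le

theorem two_pow_ceil_half_mul_le {κ L y : ℝ} (hκ : 0 < κ) (hy : 0 < y) (hL₀ : 0 ≤ L)
    (hL : 2 * (1 + Real.log κ) ≤ L) (hLy : L ≤ Real.log y) : 2 ^ ⌈L / 2⌉₊ * κ ≤ y := by
  have htwo : (2 : ℝ) ≤ Real.exp 1 := by linarith [Real.add_one_le_exp 1]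
  have hceil : (⌈L / 2⌉₊ : ℝ) ≤ L / 2 + 1 := (Nat.ceil_lt_add_one (by positivity)).le
  calc (2 : ℝ) ^ ⌈L / 2⌉₊ * κ ≤ Real.exp 1 ^ ⌈L / 2⌉₊ * Real.exp (Real.log κ) := by
        rw [Real.exp_log hκ]
        gcongr
    _ = Real.exp (⌈L / 2⌉₊ + Real.log κ) := by rw [Real.exp_one_pow, Real.exp_add]
    _ ≤ Real.exp (Real.log y) := Real.exp_le_exp.2 (by linarith)
    _ = y := Real.exp_log hy

theorem exists_isBMOSeparator_of_le_log {R a ε L : ℝ} (hR : 1 < R) (ha : 0 < a) (hε : 0 < ε)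
    (hL : 2 * (1 + Real.log (max 3 (μ.real (ball 0 ((R - 1) / 4)))⁻¹)) ≤ L)
    (hLa : L ≤ Real.log a) (hLε : L ≤ Real.log (1 / ε)) (hS : S ⊆ (ball 0 R)ᶜ)
    (hSε : μ (S ∩ ball 0 a) < ENNReal.ofReal ε) :
    ∃ f, IsBMOSeparator μ K (16 * (5 * (K + 2) ^ 2) ^ finrank ℝ E / L) S (ball 0 1) f := by
  set v := μ.real (ball (0 : E) ((R - 1) / 4))
  have hv : 0 < v :=
    ENNReal.toReal_pos (measure_ball_pos μ 0 (by linarith)).ne' measure_ball_lt_top.ne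
  set κ := max 3 v⁻¹
  have hκ : 0 < κ := lt_max_of_lt_left three_pos
  have hL₀ : 0 < L := by
    have : 0 ≤ Real.log κ := Real.log_nonneg (le_max_of_le_left (by norm_num))
    linarith
  set N := ⌈L / 2⌉₊
  have hN : N ≠ 0 := (Nat.ceil_pos.2 (half_pos hL₀)).ne'
  have hNa : 2 ^ N * 3 ≤ a :=
    (mul_le_mul_of_nonneg_left (le_max_left _ _) (by positivity)).trans
      (two_pow_ceil_half_mul_le hκ ha hL₀.le hL hLa)
  have hNε : 2 ^ N * v⁻¹ ≤ 1 / ε :=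
    (mul_le_mul_of_nonneg_left (le_max_right _ _) (by positivity)).trans
      (two_pow_ceil_half_mul_le hκ (by positivity) hL₀.le hL hLε)
  have hNv : 2 ^ N * ENNReal.ofReal ε ≤ μ (ball 0 ((R - 1) / 4)) := by
    rw [← div_eq_mul_inv, div_le_div_iff₀ hv hε, one_mul] at hNε
    calc 2 ^ N * ENNReal.ofReal ε = ENNReal.ofReal (2 ^ N * ε) := by
          simp [ENNReal.ofReal_mul, ENNReal.ofReal_pow]
      _ ≤ ENNReal.ofReal v := ENNReal.ofReal_le_ofReal hNε
      _ ≤ μ (ball 0 ((R - 1) / 4)) := ENNReal.ofReal_toReal_le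
  obtain ⟨f, hf⟩ := exists_isBMOSeparator_of_two_pow_mul_le hR hN hNa hNv hS hSε
  refine ⟨f, hf.mono ?_ subset_rfl subset_rfl⟩
  calc 8 * (5 * (K + 2) ^ 2) ^ finrank ℝ E / N
      ≤ 8 * (5 * (K + 2) ^ 2) ^ finrank ℝ E / (L / 2) := by gcongr; exact Nat.le_ceil _
    _ = 16 * (5 * (K + 2) ^ 2) ^ finrank ℝ E / L := by ring

end Separation

theorem hasEccentricityLE_axisCube {n : ℕ} (z : EuclideanSpace ℝ (Fin n)) {l : ℝ} (hl : 0 < l) :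
    HasEccentricityLE (n + 1) (axisCube z l) where
  measurableSet := by
    simp only [axisCube, Set.ofPred_forall, Set.ofPred_and]
    refine (isClosed_iInter fun i => ?_).measurableSet
    exact (isClosed_le (by fun_prop) (by fun_prop)).inter (isClosed_le (by fun_prop) (by fun_prop))
  exists_ball := by
    have hcoord (y : EuclideanSpace ℝ (Fin n)) (i : Fin n) :
        ‖(y - WithLp.toLp 2 fun i => z i + l / 2) i‖ = |y i - (z i + l / 2)| := rfl
    refine ⟨WithLp.toLp 2 fun i => z i + l / 2, l / 2, half_pos hl, fun y hy i => ?_,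
      fun y hy => ?_⟩
    · rw [mem_ball, dist_eq_norm] at hy
      have hyi := (PiLp.norm_apply_le _ i).trans_lt hy
      rw [hcoord, abs_lt] at hyi
      constructor <;> linarith
    · rw [mem_ball, dist_eq_norm, EuclideanSpace.norm_eq, Real.sqrt_lt' (by positivity)]
      calc ∑ i, ‖(y - WithLp.toLp 2 fun i => z i + l / 2) i‖ ^ 2
          ≤ ∑ _i : Fin n, (l / 2) ^ 2 := by
            gcongr with i
            rw [hcoord, abs_le]
            constructor <;> linarith [(hy i).1, (hy i).2]
        _ = n * (l / 2) ^ 2 := by simp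
        _ < ((n + 1) * (l / 2)) ^ 2 := by
            rw [mul_pow]
            gcongr
            nlinarith

theorem bmo_separating_function_general {E : Type*} [NormedAddCommGroup E] [NormedSpace ℝ E]
    [FiniteDimensional ℝ E] [MeasurableSpace E] [BorelSpace E] (μ : Measure E)
    [μ.IsAddHaarMeasure] {R : ℝ} (hR : 1 < R) (K : ℝ) :
    ∃ C > (0 : ℝ), ∀ ε a : ℝ, ε < 1 → 1 < a → ∀ S ⊆ (ball (0 : E) R)ᶜ,
      μ (S ∩ ball 0 a) < ENNReal.ofReal ε →
        ∃ f, IsBMOSeparator μ K (C / min (Real.log a) (Real.log (1 / ε))) S (ball 0 1) f := by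
  set M := 16 * (5 * (K + 2) ^ 2) ^ finrank ℝ E
  set L₀ := 2 * (1 + Real.log (max 3 (μ.real (ball (0 : E) ((R - 1) / 4)))⁻¹))
  have hM : 0 ≤ M := by positivity
  have hL₀ : 0 < L₀ := by
    have : 0 ≤ Real.log (max 3 (μ.real (ball (0 : E) ((R - 1) / 4)))⁻¹) :=
      Real.log_nonneg (le_max_of_le_left (by norm_num))
    positivity
  refine ⟨M + L₀, by positivity, fun ε a hε₁ ha S hS hSε => ?_⟩
  have hε : 0 < ε := ENNReal.ofReal_pos.1 (zero_le.trans_lt hSε)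
  set L := min (Real.log a) (Real.log (1 / ε))
  have hL : 0 < L := lt_min (Real.log_pos ha) (Real.log_pos (one_lt_one_div hε hε₁))
  rcases lt_or_ge L L₀ with hsmall | hlarge
  · refine ⟨_, (isBMOSeparator_indicator measurableSet_ball).mono ?_
      (hS.trans (Set.compl_subset_compl.2 (ball_subset_ball hR.le))) subset_rfl⟩
    rw [one_le_div hL]
    linarith
  · obtain ⟨f, hf⟩ := exists_isBMOSeparator_of_le_log hR (by linarith) hε hlarge
      (min_le_left _ _) (min_le_right _ _) hS hSε
    exact ⟨f, hf.mono (by gcongr; linarith) subset_rfl subset_rfl⟩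

/-- For `0 < ε ≤ 1/2`, `a > 3` and `E ⊆ (2B)ᶜ` with `|E ∩ aB| < ε` (`B` the unit ball), there is
a locally integrable `f` with `f = 0` on `E`, `f = 1` on `B`, and BMO seminorm (over
axis-parallel cubes) at most `C(n)/min{log a, log(1/ε)}`. -/
theorem bmo_separating_function (n : ℕ) (hn : 1 ≤ n) :
    ∃ C > (0:ℝ), ∀ ε a : ℝ, 0 < ε → ε ≤ 1 / 2 → 3 < a →
      ∀ E : Set (EuclideanSpace ℝ (Fin n)), MeasurableSet E →
        E ⊆ (ball (0 : EuclideanSpace ℝ (Fin n)) 2)ᶜ →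
        volume (E ∩ ball (0 : EuclideanSpace ℝ (Fin n)) a) < ENNReal.ofReal ε →
        ∃ f : EuclideanSpace ℝ (Fin n) → ℝ,
          LocallyIntegrable f volume ∧
          (∀ x ∈ E, f x = 0) ∧
          (∀ x ∈ ball (0 : EuclideanSpace ℝ (Fin n)) 1, f x = 1) ∧
          ∀ (z : EuclideanSpace ℝ (Fin n)) (l : ℝ), 0 < l →
            ⨍ y in axisCube z l, |f y - ⨍ w in axisCube z l, f w| ≤
              C / min (Real.log a) (Real.log (1 / ε)) := by
  obtain ⟨C, hC, H⟩ := bmo_separating_function_general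
    (volume : Measure (EuclideanSpace ℝ (Fin n))) one_lt_two (n + 1)
  refine ⟨C, hC, fun ε a _ hε ha E _ hE₂ hE => ?_⟩
  obtain ⟨f, hf⟩ := H ε a (by linarith) (by linarith) E hE₂ hE
  exact ⟨f, hf.locallyIntegrable, hf.eq_zero, hf.eq_one,
    fun z l hl => hf.meanOscillation_le _ (hasEccentricityLE_axisCube z hl)⟩
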